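/- The space of torsion tensors on ℝ⁴ of anti-Z type, i.e. satisfying Z_{ijk} = 0 for every direct ordering (i,j,k,l), equals the internal direct sum C₋ ⊕ 𝒜₊. -/

import Mathlib

/-!
For a torsion tensor `T` and a direct ordering `(i,j,k,l)`,
`Z_{ijk} = c(T)(eᵢ) + (T_{jkl} − T_{ill})`. A trace-free `T` is therefore of anti-`Z` type exactly
when `T_{jkl} = T_{ill}` for every direct ordering, and applying this to the orderings obtained by
the Klein four-group shows that it is selfduality of `T` in its first two arguments. Cyclic
rotation of `j,k,l` turns the same equalities into `𝔟(T)(eⱼ,eₖ,eₗ) = c(T)(eᵢ)`, so the Bianchi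
identity comes for free, and `𝒜₊` is the trace-free part of the anti-`Z` space.

The element of `C₋` attached to `ν` is of anti-`Z` type and has trace `3ν`, so `C₋` is a complement
of `ker c` contained in the anti-`Z` space, and the modular law gives the decomposition.
-/

noncomputable section

set_option maxSynthPendingDepth 3

/-- Euclidean `n`-space `ℝⁿ`. -/
abbrev V (n : ℕ) := Fin n → ℝ

/-- Trilinear forms on `ℝⁿ`. -/
abbrev Tri (n : ℕ) := V n →ₗ[ℝ] V n →ₗ[ℝ] V n →ₗ[ℝ] ℝ

/-- The standard inner product on `ℝⁿ`. -/
def inn {n : ℕ} (X Y : V n) : ℝ := ∑ i, X i * Y i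

/-- The standard orthonormal basis of `ℝⁿ`. -/
def stdB {n : ℕ} (i : Fin n) : V n := Pi.single i 1

/-- Torsion tensors: trilinear forms antisymmetric in the first two arguments. -/
def Torsion (n : ℕ) : Submodule ℝ (Tri n) where
  carrier := {T | ∀ X Y Z, T X Y Z = - T Y X Z}
  zero_mem' := by intro X Y Z; simp
  add_mem' := by
    intro T S hT hS X Y Z
    simp only [LinearMap.add_apply]
    linear_combination hT X Y Z + hS X Y Z
  smul_mem' := by
    intro c T hT X Y Z
    simp only [LinearMap.smul_apply, smul_eq_mul]
    linear_combination c * hT X Y Z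

/-- The kernel of the Bianchi map `𝔟(T)(X,Y,Z) = T(X,Y,Z) + T(Y,Z,X) + T(Z,X,Y)`. -/
def kerBianchi (n : ℕ) : Submodule ℝ (Tri n) where
  carrier := {T | ∀ X Y Z, T X Y Z + T Y Z X + T Z X Y = 0}
  zero_mem' := by intro X Y Z; simp
  add_mem' := by
    intro T S hT hS X Y Z
    simp only [LinearMap.add_apply]
    linear_combination hT X Y Z + hS X Y Z
  smul_mem' := by
    intro c T hT X Y Z
    simp only [LinearMap.smul_apply, smul_eq_mul]
    linear_combination c * hT X Y Z

/-- The kernel of the trace map `c(T)(X) = Σⱼ T(X,eⱼ,eⱼ)`. -/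
def kerTrace (n : ℕ) : Submodule ℝ (Tri n) where
  carrier := {T | ∀ X, ∑ j, T X (stdB j) (stdB j) = 0}
  zero_mem' := by intro X; simp
  add_mem' := by
    intro T S hT hS X
    simp only [LinearMap.add_apply, Finset.sum_add_distrib]
    rw [hT X, hS X]; ring
  smul_mem' := by
    intro c T hT X
    simp only [LinearMap.smul_apply, smul_eq_mul, ← Finset.mul_sum]
    rw [hT X, mul_zero]
/-- The Cartan component `𝒜 = ker 𝔟 ∩ ker c` (inside the torsion tensors). -/
def CartanA (n : ℕ) : Submodule ℝ (Tri n) := Torsion n ⊓ kerBianchi n ⊓ kerTrace n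

/-! ### Selfdual and anti-selfdual 2-forms on `ℝ⁴` -/

/-- The selfdual 2-form `e⁰∧e¹ + e²∧e³`. -/
def sd₁ (X Y : V 4) : ℝ := (X 0 * Y 1 - X 1 * Y 0) + (X 2 * Y 3 - X 3 * Y 2)

/-- The selfdual 2-form `e⁰∧e² + e³∧e¹`. -/
def sd₂ (X Y : V 4) : ℝ := (X 0 * Y 2 - X 2 * Y 0) + (X 3 * Y 1 - X 1 * Y 3)

/-- The selfdual 2-form `e⁰∧e³ + e¹∧e²`. -/
def sd₃ (X Y : V 4) : ℝ := (X 0 * Y 3 - X 3 * Y 0) + (X 1 * Y 2 - X 2 * Y 1)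

/-- The anti-selfdual 2-form `e⁰∧e¹ − e²∧e³`. -/
def asd₁ (X Y : V 4) : ℝ := (X 0 * Y 1 - X 1 * Y 0) - (X 2 * Y 3 - X 3 * Y 2)

/-- The anti-selfdual 2-form `e⁰∧e² − e³∧e¹`. -/
def asd₂ (X Y : V 4) : ℝ := (X 0 * Y 2 - X 2 * Y 0) - (X 3 * Y 1 - X 1 * Y 3)

/-- The anti-selfdual 2-form `e⁰∧e³ − e¹∧e²`. -/
def asd₃ (X Y : V 4) : ℝ := (X 0 * Y 3 - X 3 * Y 0) - (X 1 * Y 2 - X 2 * Y 1)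

/-- `𝒜₊`: members of `𝒜` such that for every `Z` the 2-form `(X,Y) ↦ T(X,Y,Z)` is
a combination of the selfdual forms. -/
def Aplus : Submodule ℝ (Tri 4) where
  carrier := {T | T ∈ CartanA 4 ∧ ∀ Z, ∃ a b c : ℝ, ∀ X Y,
      T X Y Z = a * sd₁ X Y + b * sd₂ X Y + c * sd₃ X Y}
  zero_mem' := ⟨(CartanA 4).zero_mem, fun Z => ⟨0, 0, 0, by intro X Y; simp⟩⟩
  add_mem' := by
    rintro T S ⟨hT, hT'⟩ ⟨hS, hS'⟩
    refine ⟨(CartanA 4).add_mem hT hS, fun Z => ?_⟩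
    obtain ⟨a, b, c, h⟩ := hT' Z
    obtain ⟨a', b', c', h'⟩ := hS' Z
    refine ⟨a + a', b + b', c + c', fun X Y => ?_⟩
    simp only [LinearMap.add_apply]
    linear_combination h X Y + h' X Y
  smul_mem' := by
    rintro r T ⟨hT, hT'⟩
    refine ⟨(CartanA 4).smul_mem r hT, fun Z => ?_⟩
    obtain ⟨a, b, c, h⟩ := hT' Z
    refine ⟨r * a, r * b, r * c, fun X Y => ?_⟩
    simp only [LinearMap.smul_apply, smul_eq_mul]
    linear_combination r * h X Y

/-- `𝒜₋`: members of `𝒜` such that for every `Z` the 2-form `(X,Y) ↦ T(X,Y,Z)` is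
a combination of the anti-selfdual forms. -/
def Aminus : Submodule ℝ (Tri 4) where
  carrier := {T | T ∈ CartanA 4 ∧ ∀ Z, ∃ a b c : ℝ, ∀ X Y,
      T X Y Z = a * asd₁ X Y + b * asd₂ X Y + c * asd₃ X Y}
  zero_mem' := ⟨(CartanA 4).zero_mem, fun Z => ⟨0, 0, 0, by intro X Y; simp⟩⟩
  add_mem' := by
    rintro T S ⟨hT, hT'⟩ ⟨hS, hS'⟩
    refine ⟨(CartanA 4).add_mem hT hS, fun Z => ?_⟩
    obtain ⟨a, b, c, h⟩ := hT' Z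
    obtain ⟨a', b', c', h'⟩ := hS' Z
    refine ⟨a + a', b + b', c + c', fun X Y => ?_⟩
    simp only [LinearMap.add_apply]
    linear_combination h X Y + h' X Y
  smul_mem' := by
    rintro r T ⟨hT, hT'⟩
    refine ⟨(CartanA 4).smul_mem r hT, fun Z => ?_⟩
    obtain ⟨a, b, c, h⟩ := hT' Z
    refine ⟨r * a, r * b, r * c, fun X Y => ?_⟩
    simp only [LinearMap.smul_apply, smul_eq_mul]
    linear_combination r * h X Y

/-- `(i,j,k,l)` is a direct ordering when it is an even permutation of `(0,1,2,3)`. -/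
def DirectOrdering (i j k l : Fin 4) : Prop :=
  ∃ σ : Equiv.Perm (Fin 4), Equiv.Perm.sign σ = 1 ∧ σ 0 = i ∧ σ 1 = j ∧ σ 2 = k ∧ σ 3 = l

instance (i j k l : Fin 4) : Decidable (DirectOrdering i j k l) :=
  inferInstanceAs (Decidable (∃ σ : Equiv.Perm (Fin 4),
    Equiv.Perm.sign σ = 1 ∧ σ 0 = i ∧ σ 1 = j ∧ σ 2 = k ∧ σ 3 = l))

/-- `Z_{ijk} = T_{ijj} + T_{ikk} + T_{jkl}` for a direct ordering `(i,j,k,l)`. -/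
def Zc (T : Tri 4) (i j k l : Fin 4) : ℝ :=
  T (stdB i) (stdB j) (stdB j) + T (stdB i) (stdB k) (stdB k) + T (stdB j) (stdB k) (stdB l)

/-- The space of torsion tensors of anti-`Z` type: `Z_{ijk} = 0` for every direct
ordering `(i,j,k,l)`. -/
def AntiZ : Submodule ℝ (Tri 4) where
  carrier := {T | T ∈ Torsion 4 ∧ ∀ i j k l, DirectOrdering i j k l → Zc T i j k l = 0}
  zero_mem' := ⟨(Torsion 4).zero_mem, by intro i j k l _; simp [Zc]⟩
  add_mem' := by
    rintro T S ⟨hT, hT'⟩ ⟨hS, hS'⟩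
    refine ⟨(Torsion 4).add_mem hT hS, fun i j k l h => ?_⟩
    have h1 := hT' i j k l h
    have h2 := hS' i j k l h
    simp only [Zc, LinearMap.add_apply] at h1 h2 ⊢
    linear_combination h1 + h2
  smul_mem' := by
    rintro c T ⟨hT, hT'⟩
    refine ⟨(Torsion 4).smul_mem c hT, fun i j k l h => ?_⟩
    have h1 := hT' i j k l h
    simp only [Zc, LinearMap.smul_apply, smul_eq_mul] at h1 ⊢
    linear_combination c * h1

/-- The volume form of `ℝ⁴`: the determinant with respect to the standard basis. -/
def vol4 (a b c d : V 4) : ℝ := Matrix.det (Matrix.of ![a, b, c, d])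

/-- The vector dual to a linear functional `ν` under the standard inner product. -/
def sharp (ν : V 4 →ₗ[ℝ] ℝ) : V 4 := fun i => ν (stdB i)

lemma sharp_add (ν ρ : V 4 →ₗ[ℝ] ℝ) : sharp (ν + ρ) = sharp ν + sharp ρ := by
  funext i; simp [sharp]

lemma sharp_smul (c : ℝ) (ν : V 4 →ₗ[ℝ] ℝ) : sharp (c • ν) = c • sharp ν := by
  funext i; simp [sharp]

lemma vol4_add_left (a b x y z : V 4) :
    vol4 (a + b) x y z = vol4 a x y z + vol4 b x y z := by
  simp [vol4, Matrix.det_succ_row_zero, Fin.sum_univ_succ, Pi.add_apply]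
  ring

lemma vol4_smul_left (c : ℝ) (a x y z : V 4) :
    vol4 (c • a) x y z = c * vol4 a x y z := by
  simp [vol4, Matrix.det_succ_row_zero, Fin.sum_univ_succ, Pi.smul_apply, smul_eq_mul]
  ring

lemma vol4_zero_left (x y z : V 4) : vol4 0 x y z = 0 := by
  simp [vol4, Matrix.det_succ_row_zero, Fin.sum_univ_succ]

/-- `C₋`: tensors `T(X,Y,Z) = ν(X)⟨Y,Z⟩ − ν(Y)⟨X,Z⟩ − 2 vol(ν♯,X,Y,Z)`. -/
def Cminus : Submodule ℝ (Tri 4) where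
  carrier := {T | ∃ ν : V 4 →ₗ[ℝ] ℝ, ∀ X Y Z,
      T X Y Z = ν X * inn Y Z - ν Y * inn X Z - 2 * vol4 (sharp ν) X Y Z}
  zero_mem' := ⟨0, by
    intro X Y Z
    have h : sharp (0 : V 4 →ₗ[ℝ] ℝ) = 0 := by funext i; simp [sharp]
    simp [h, vol4_zero_left]⟩
  add_mem' := by
    rintro T S ⟨ν, hν⟩ ⟨ρ, hρ⟩
    refine ⟨ν + ρ, fun X Y Z => ?_⟩
    simp only [LinearMap.add_apply, sharp_add, vol4_add_left]
    linear_combination hν X Y Z + hρ X Y Z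
  smul_mem' := by
    rintro c T ⟨ν, hν⟩
    refine ⟨c • ν, fun X Y Z => ?_⟩
    simp only [LinearMap.smul_apply, smul_eq_mul, sharp_smul, vol4_smul_left]
    linear_combination c * hν X Y Z

section Coordinates

variable {n : ℕ}

lemma stdB_apply (i j : Fin n) : (stdB i : V n) j = if j = i then 1 else 0 :=
  Pi.single_apply i 1 j

lemma inn_stdB_right (X : V n) (i : Fin n) : inn X (stdB i) = X i := by
  simp [inn, stdB_apply]

lemma apply_eq_sum_stdB {M : Type*} [AddCommMonoid M] [Module ℝ M] (f : V n →ₗ[ℝ] M) (X : V n) :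
    f X = ∑ i, X i • f (stdB i) := by
  conv_lhs => rw [← (Pi.basisFun ℝ (Fin n)).sum_repr X]
  simp [stdB]

lemma bilin_apply_eq_sum_stdB (B : V n →ₗ[ℝ] V n →ₗ[ℝ] ℝ) (X Y : V n) :
    B X Y = ∑ i, ∑ j, X i * (Y j * B (stdB i) (stdB j)) := by
  simp only [apply_eq_sum_stdB B X, LinearMap.sum_apply, LinearMap.smul_apply,
    apply_eq_sum_stdB (B _) Y, smul_eq_mul, Finset.mul_sum]

lemma ext_stdB {M : Type*} [AddCommMonoid M] [Module ℝ M] {f g : V n →ₗ[ℝ] M}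
    (h : ∀ i, f (stdB i) = g (stdB i)) : f = g :=
  (Pi.basisFun ℝ (Fin n)).ext fun i => by simpa [stdB] using h i

lemma torsion_apply_self {T : Tri n} (hT : T ∈ Torsion n) (X Y : V n) : T X X Y = 0 :=
  self_eq_neg.1 (hT X X Y)

lemma mem_kerBianchi_of_stdB {T : Tri n}
    (h : ∀ i j k, T (stdB i) (stdB j) (stdB k) + T (stdB j) (stdB k) (stdB i)
      + T (stdB k) (stdB i) (stdB j) = 0) : T ∈ kerBianchi n := by
  have bianchi_eq_zero :
      T + (LinearMap.lflip.toLinearMap ∘ₗ T).flip + LinearMap.lflip.toLinearMap ∘ₗ T.flip = 0 :=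
    ext_stdB fun i => ext_stdB fun j => ext_stdB fun k => h i j k
  exact fun X Y Z => congr($bianchi_eq_zero X Y Z)

/-- The trace map `c(T)(X) = Σⱼ T(X,eⱼ,eⱼ)`, with values in linear functionals. -/
def torsionTrace (T : Tri n) : V n →ₗ[ℝ] ℝ :=
  ∑ j, (T.flip (stdB j)).flip (stdB j)

lemma torsionTrace_apply (T : Tri n) (X : V n) :
    torsionTrace T X = ∑ j, T X (stdB j) (stdB j) := by
  simp [torsionTrace]

lemma torsionTrace_sub (T S : Tri n) : torsionTrace (T - S) = torsionTrace T - torsionTrace S := by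
  ext; simp [torsionTrace_apply]

lemma mem_kerTrace_iff {T : Tri n} : T ∈ kerTrace n ↔ torsionTrace T = 0 := by
  simp only [LinearMap.ext_iff, torsionTrace_apply]
  rfl

end Coordinates

namespace DirectOrdering

variable {i j k l : Fin 4}

lemma rotate (h : DirectOrdering i j k l) : DirectOrdering i k l j := by
  obtain ⟨σ, hσ, rfl, rfl, rfl, rfl⟩ := h
  exact ⟨σ * (Equiv.swap 1 2 * Equiv.swap 2 3), by simp [hσ], rfl, rfl, rfl, rfl⟩

lemma swap_pairs (h : DirectOrdering i j k l) : DirectOrdering j i l k := by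
  obtain ⟨σ, hσ, rfl, rfl, rfl, rfl⟩ := h
  exact ⟨σ * (Equiv.swap 0 1 * Equiv.swap 2 3), by simp [hσ], rfl, rfl, rfl, rfl⟩

lemma swap_halves (h : DirectOrdering i j k l) : DirectOrdering k l i j := by
  obtain ⟨σ, hσ, rfl, rfl, rfl, rfl⟩ := h
  exact ⟨σ * (Equiv.swap 0 2 * Equiv.swap 1 3), by simp [hσ], rfl, rfl, rfl, rfl⟩

lemma reverse (h : DirectOrdering i j k l) : DirectOrdering l k j i :=
  h.swap_pairs.swap_halves

lemma forall_iff (h : DirectOrdering i j k l) {p : Fin 4 → Prop} :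
    (∀ m, p m) ↔ p i ∧ p j ∧ p k ∧ p l := by
  obtain ⟨σ, -, rfl, rfl, rfl, rfl⟩ := h
  rw [σ.surjective.forall]
  exact ⟨fun h => ⟨h 0, h 1, h 2, h 3⟩, fun ⟨h₀, h₁, h₂, h₃⟩ m => by fin_cases m <;> assumption⟩

lemma sum_eq (h : DirectOrdering i j k l) {M : Type*} [AddCommMonoid M] (f : Fin 4 → M) :
    ∑ m, f m = f i + f j + f k + f l := by
  obtain ⟨σ, -, rfl, rfl, rfl, rfl⟩ := h
  rw [← Equiv.sum_comp σ f, Fin.sum_univ_four]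

lemma zero_iff : DirectOrdering 0 j k l ↔
    (j = 1 ∧ k = 2 ∧ l = 3) ∨ (j = 2 ∧ k = 3 ∧ l = 1) ∨ (j = 3 ∧ k = 1 ∧ l = 2) := by
  revert j k l
  decide +kernel

lemma exists_of_ne (hjk : j ≠ k) (hkl : k ≠ l) (hlj : l ≠ j) :
    ∃ i, DirectOrdering i j k l ∨ DirectOrdering i k j l := by
  revert j k l
  decide +kernel

end DirectOrdering

section Selfdual

/-- Selfduality of a 2-form on `ℝ⁴`, encoded by its components: it takes the same value on the
Hodge-dual basis bivectors `eⱼ ∧ eₖ` and `eᵢ ∧ eₗ`. -/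
def IsSelfdual (B : V 4 →ₗ[ℝ] V 4 →ₗ[ℝ] ℝ) : Prop :=
  ∀ i j k l, DirectOrdering i j k l → B (stdB j) (stdB k) = B (stdB i) (stdB l)

variable {B : V 4 →ₗ[ℝ] V 4 →ₗ[ℝ] ℝ}

lemma isSelfdual_iff (hB : B.IsAlt) : IsSelfdual B ↔
    B (stdB 2) (stdB 3) = B (stdB 0) (stdB 1) ∧ B (stdB 3) (stdB 1) = B (stdB 0) (stdB 2) ∧
      B (stdB 1) (stdB 2) = B (stdB 0) (stdB 3) := by
  refine ⟨fun h => ⟨h _ _ _ _ ?_, h _ _ _ _ ?_, h _ _ _ _ ?_⟩, fun ⟨h₁, h₂, h₃⟩ => ?_⟩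
  iterate 3 exact DirectOrdering.zero_iff.2 (by decide)
  have alt (X Y : V 4) : B X Y = -B Y X := (hB.neg Y X).symm
  have of_zero {j k l} (h : DirectOrdering 0 j k l) :
      B (stdB j) (stdB k) = B (stdB 0) (stdB l) := by
    rcases DirectOrdering.zero_iff.1 h with
      ⟨rfl, rfl, rfl⟩ | ⟨rfl, rfl, rfl⟩ | ⟨rfl, rfl, rfl⟩ <;> assumption
  intro i j k l h
  obtain h0 : i = 0 ∨ j = 0 ∨ k = 0 ∨ l = 0 := by
    by_contra! hne
    exact (h.forall_iff (p := (· ≠ 0))).2 hne 0 rfl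
  rcases h0 with rfl | rfl | rfl | rfl
  · exact of_zero h
  · exact (of_zero h.swap_pairs).symm
  · rw [alt, alt (stdB i), of_zero h.swap_halves]
  · rw [alt, alt (stdB i), of_zero h.reverse]

lemma exists_eq_selfdual_iff (hB : B.IsAlt) :
    (∃ a b c : ℝ, ∀ X Y, B X Y = a * sd₁ X Y + b * sd₂ X Y + c * sd₃ X Y) ↔ IsSelfdual B := by
  rw [isSelfdual_iff hB]
  constructor
  · rintro ⟨a, b, c, h⟩
    simp [h, sd₁, sd₂, sd₃, stdB_apply]
  · rintro ⟨h₁, h₂, h₃⟩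
    refine ⟨B (stdB 0) (stdB 1), B (stdB 0) (stdB 2), B (stdB 0) (stdB 3), fun X Y => ?_⟩
    have alt (i j : Fin 4) : B (stdB i) (stdB j) = -B (stdB j) (stdB i) := (hB.neg _ _).symm
    simp only [bilin_apply_eq_sum_stdB B X Y, Fin.sum_univ_four, hB.self_eq_zero, alt 1 0, alt 2 0,
      alt 3 0, alt 2 1, alt 3 2, alt 1 3, h₁, h₂, h₃, sd₁, sd₂, sd₃]
    ring

end Selfdual

/-- The bilinear form `(X,Y) ↦ T(X,Y,Z)`, a 2-form when `T` is a torsion tensor. -/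
def formAt {n : ℕ} (T : Tri n) (Z : V n) : V n →ₗ[ℝ] V n →ₗ[ℝ] ℝ :=
  T.compr₂ (LinearMap.applyₗ Z)

lemma isAlt_formAt {n : ℕ} {T : Tri n} (hT : T ∈ Torsion n) (Z : V n) : (formAt T Z).IsAlt :=
  fun X => torsion_apply_self hT X Z

section AntiZ

variable {T : Tri 4}

lemma mem_Aplus_iff :
    T ∈ Aplus ↔ T ∈ CartanA 4 ∧ ∀ Z, IsSelfdual (formAt T Z) :=
  and_congr_right fun hT =>
    forall_congr' fun Z => exists_eq_selfdual_iff (isAlt_formAt hT.1.1 Z)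

lemma forall_isSelfdual_formAt_iff (hT : T ∈ Torsion 4) :
    (∀ Z, IsSelfdual (formAt T Z)) ↔ ∀ i j k l, DirectOrdering i j k l →
      T (stdB j) (stdB k) (stdB l) = T (stdB i) (stdB l) (stdB l) := by
  refine ⟨fun h i j k l hd => h (stdB l) i j k l hd, fun h Z i j k l hd => ?_⟩
  suffices T (stdB j) (stdB k) = T (stdB i) (stdB l) from congr($this Z)
  -- The Klein four-group permutes the direct orderings and moves any index to the last place.
  refine ext_stdB (hd.forall_iff.2 ⟨?_, ?_, ?_, h _ _ _ _ hd⟩)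
  · rw [hT (stdB j), h _ _ _ _ hd.reverse, hT (stdB l), neg_neg]
  · rw [hT (stdB i), h _ _ _ _ hd.swap_halves, hT (stdB k), neg_neg]
  · exact (h _ _ _ _ hd.swap_pairs).symm

lemma torsionTrace_stdB (hT : T ∈ Torsion 4) {i j k l : Fin 4} (hd : DirectOrdering i j k l) :
    torsionTrace T (stdB i) = T (stdB i) (stdB j) (stdB j) + T (stdB i) (stdB k) (stdB k)
      + T (stdB i) (stdB l) (stdB l) := by
  rw [torsionTrace_apply, hd.sum_eq, torsion_apply_self hT, zero_add]

lemma Zc_eq_torsionTrace_add (hT : T ∈ Torsion 4) {i j k l : Fin 4}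
    (hd : DirectOrdering i j k l) :
    Zc T i j k l = torsionTrace T (stdB i)
      + (T (stdB j) (stdB k) (stdB l) - T (stdB i) (stdB l) (stdB l)) := by
  rw [torsionTrace_stdB hT hd, Zc]
  ring

lemma mem_AntiZ_iff_isSelfdual (hT : T ∈ Torsion 4) (htr : T ∈ kerTrace 4) :
    T ∈ AntiZ ↔ ∀ Z, IsSelfdual (formAt T Z) := by
  rw [forall_isSelfdual_formAt_iff hT]
  refine (and_iff_right hT).trans (forall₄_congr fun i j k l => forall_congr' fun hd => ?_)
  rw [Zc_eq_torsionTrace_add hT hd, mem_kerTrace_iff.1 htr, LinearMap.zero_apply, zero_add,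
    sub_eq_zero]

lemma bianchi_stdB_eq_torsionTrace (hT : T ∈ Torsion 4) (hsd : ∀ Z, IsSelfdual (formAt T Z))
    {i j k l : Fin 4} (hd : DirectOrdering i j k l) :
    T (stdB j) (stdB k) (stdB l) + T (stdB k) (stdB l) (stdB j) + T (stdB l) (stdB j) (stdB k)
      = torsionTrace T (stdB i) := by
  have component := (forall_isSelfdual_formAt_iff hT).1 hsd
  rw [torsionTrace_stdB hT hd, component _ _ _ _ hd, component _ _ _ _ hd.rotate,
    component _ _ _ _ hd.rotate.rotate]
  ring

lemma mem_kerBianchi_of_isSelfdual (hT : T ∈ Torsion 4) (htr : T ∈ kerTrace 4)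
    (hsd : ∀ Z, IsSelfdual (formAt T Z)) : T ∈ kerBianchi 4 := by
  have bianchi_of_direct {i j k l} (hd : DirectOrdering i j k l) :=
    bianchi_stdB_eq_torsionTrace hT hsd hd
  simp only [mem_kerTrace_iff.1 htr, LinearMap.zero_apply] at bianchi_of_direct
  refine mem_kerBianchi_of_stdB fun j k l => ?_
  by_cases hjk : j = k
  · subst hjk
    linear_combination torsion_apply_self hT (stdB j) (stdB l) + hT (stdB j) (stdB l) (stdB j)
  by_cases hkl : k = l
  · subst hkl
    linear_combination torsion_apply_self hT (stdB k) (stdB j) + hT (stdB k) (stdB j) (stdB k)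
  by_cases hlj : l = j
  · subst hlj
    linear_combination torsion_apply_self hT (stdB l) (stdB k) + hT (stdB l) (stdB k) (stdB l)
  obtain ⟨i, hd | hd⟩ := DirectOrdering.exists_of_ne hjk hkl hlj
  · exact bianchi_of_direct hd
  · linear_combination hT (stdB j) (stdB k) (stdB l) + hT (stdB k) (stdB l) (stdB j)
      + hT (stdB l) (stdB j) (stdB k) - bianchi_of_direct hd

lemma Aplus_eq_AntiZ_inf_kerTrace : Aplus = AntiZ ⊓ kerTrace 4 := by
  ext T
  rw [mem_Aplus_iff, Submodule.mem_inf]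
  constructor
  · rintro ⟨⟨⟨hT, -⟩, htr⟩, hsd⟩
    exact ⟨(mem_AntiZ_iff_isSelfdual hT htr).2 hsd, htr⟩
  · rintro ⟨hZ, htr⟩
    have hsd := (mem_AntiZ_iff_isSelfdual hZ.1 htr).1 hZ
    exact ⟨⟨⟨hZ.1, mem_kerBianchi_of_isSelfdual hZ.1 htr hsd⟩, htr⟩, hsd⟩

end AntiZ

section Cminus

lemma vol4_swap_middle (a X Y Z : V 4) : vol4 a Y X Z = -vol4 a X Y Z := by
  have swap_rows : Matrix.of ![a, Y, X, Z] =
      (Matrix.of ![a, X, Y, Z]).submatrix (Equiv.swap 1 2) id := by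
    ext m
    fin_cases m <;> rfl
  rw [vol4, swap_rows, Matrix.det_permute, Equiv.Perm.sign_swap (by decide)]
  simp [vol4]

lemma vol4_last_eq (a X Y : V 4) : vol4 a X Y Y = 0 :=
  Matrix.detRowAlternating.map_eq_zero_of_eq ![a, X, Y, Y] (i := 2) (j := 3) rfl (by decide)

lemma vol4_stdB_of_directOrdering (a : V 4) {i j k l : Fin 4} (hd : DirectOrdering i j k l) :
    vol4 a (stdB j) (stdB k) (stdB l) = a i := by
  obtain ⟨σ, hσ, rfl, rfl, rfl, rfl⟩ := hd
  set M : Matrix (Fin 4) (Fin 4) ℝ := Matrix.of ![a, stdB (σ 1), stdB (σ 2), stdB (σ 3)] with hM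
  have upper : (M.submatrix id σ).BlockTriangular id := by
    intro r s hrs
    fin_cases r <;> fin_cases s <;> simp_all [stdB_apply]
  calc M.det = (M.submatrix id σ).det := by simp [Matrix.det_permute', hσ]
    _ = a (σ 0) := by
      rw [Matrix.det_of_isUpperTriangular upper, Fin.prod_univ_four]
      simp [hM, stdB_apply]

/-- The trilinear form `vol(a, ·, ·, ·)`, obtained by currying the determinant. -/
def volTri (a : V 4) : Tri 4 :=
  (AlternatingMap.curryLeftLinearMap ∘ₗ (Matrix.detRowAlternating.curryLeft a).curryLeft).compr₂
    (AlternatingMap.constLinearEquivOfIsEmpty.symm.toLinearMap.compRight ℝ ∘ₗ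
      AlternatingMap.curryLeftLinearMap)

lemma volTri_apply (a X Y Z : V 4) : volTri a X Y Z = vol4 a X Y Z := by
  simp only [volTri, LinearMap.compr₂_apply, LinearMap.comp_apply, LinearMap.compRight_apply,
    AlternatingMap.curryLeftLinearMap_apply, AlternatingMap.curryLeft_apply_apply,
    LinearEquiv.coe_coe, AlternatingMap.constLinearEquivOfIsEmpty_symm_apply, Matrix.zero_empty]
  rfl

/-- The member `ν(X)⟨Y,Z⟩ − ν(Y)⟨X,Z⟩ − 2 vol(ν♯,X,Y,Z)` of `C₋` attached to `ν`, as a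
trilinear form. -/
def cminusTensor (ν : V 4 →ₗ[ℝ] ℝ) : Tri 4 :=
  ν.smulRight (dotProductBilin ℝ ℝ) - (ν.smulRight (dotProductBilin ℝ ℝ)).flip
    - 2 • volTri (sharp ν)

lemma cminusTensor_apply (ν : V 4 →ₗ[ℝ] ℝ) (X Y Z : V 4) :
    cminusTensor ν X Y Z = ν X * inn Y Z - ν Y * inn X Z - 2 * vol4 (sharp ν) X Y Z := by
  simp [cminusTensor, volTri_apply, inn, dotProduct]

lemma mem_Cminus_iff {T : Tri 4} : T ∈ Cminus ↔ ∃ ν, cminusTensor ν = T := by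
  simp only [LinearMap.ext_iff, cminusTensor_apply, eq_comm (b := T _ _ _)]
  rfl

lemma cminusTensor_zero : cminusTensor 0 = 0 := by
  have sharp_zero : sharp 0 = 0 := rfl
  ext
  simp [cminusTensor_apply, sharp_zero, vol4_zero_left]

lemma torsionTrace_cminusTensor (ν : V 4 →ₗ[ℝ] ℝ) :
    torsionTrace (cminusTensor ν) = (3 : ℝ) • ν := by
  refine LinearMap.ext fun X => ?_
  calc torsionTrace (cminusTensor ν) X
      = ∑ _j : Fin 4, ν X - ∑ j, X j * ν (stdB j) := by
        simp [torsionTrace_apply, cminusTensor_apply, vol4_last_eq, inn_stdB_right, stdB_apply,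
          mul_comm]
    _ = 4 * ν X - ν X := by rw [apply_eq_sum_stdB ν X]; simp
    _ = 3 * ν X := by ring

lemma cminusTensor_mem_Torsion (ν : V 4 →ₗ[ℝ] ℝ) : cminusTensor ν ∈ Torsion 4 := fun X Y Z => by
  rw [cminusTensor_apply, cminusTensor_apply, vol4_swap_middle]
  ring

lemma Cminus_le_AntiZ : Cminus ≤ AntiZ := by
  intro T hT
  obtain ⟨ν, rfl⟩ := mem_Cminus_iff.1 hT
  refine ⟨cminusTensor_mem_Torsion ν, fun i j k l hd => ?_⟩
  have hjkl : cminusTensor ν (stdB j) (stdB k) (stdB l) = -2 * ν (stdB i) := by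
    have hvol := vol4_stdB_of_directOrdering (sharp ν) hd
    obtain ⟨σ, -, rfl, rfl, rfl, rfl⟩ := hd
    simp [cminusTensor_apply, inn_stdB_right, stdB_apply, hvol, sharp]
  have hill : cminusTensor ν (stdB i) (stdB l) (stdB l) = ν (stdB i) := by
    obtain ⟨σ, -, rfl, rfl, rfl, rfl⟩ := hd
    simp [cminusTensor_apply, inn_stdB_right, stdB_apply, vol4_last_eq]
  rw [Zc_eq_torsionTrace_add (cminusTensor_mem_Torsion ν) hd, torsionTrace_cminusTensor, hjkl, hill,
    LinearMap.smul_apply, smul_eq_mul]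
  ring

lemma isCompl_Cminus_kerTrace : IsCompl Cminus (kerTrace 4) := by
  constructor
  · refine Submodule.disjoint_def.2 fun T hT htr => ?_
    obtain ⟨ν, rfl⟩ := mem_Cminus_iff.1 hT
    have hν : ν = 0 := by simpa [torsionTrace_cminusTensor] using mem_kerTrace_iff.1 htr
    rw [hν, cminusTensor_zero]
  · refine Submodule.codisjoint_iff_exists_add_eq.2 fun T => ?_
    set ν := (1 / 3 : ℝ) • torsionTrace T with hν
    refine ⟨cminusTensor ν, T - cminusTensor ν, mem_Cminus_iff.2 ⟨ν, rfl⟩, ?_,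
      add_sub_cancel _ _⟩
    rw [mem_kerTrace_iff, torsionTrace_sub, torsionTrace_cminusTensor, hν, smul_smul]
    norm_num

end Cminus

/-- the space of torsion tensors on `ℝ⁴` of anti-`Z` type equals the
internal direct sum `C₋ ⊕ 𝒜₊`. -/
theorem antiZ_eq_cminus_sup_aplus :
    AntiZ = Cminus ⊔ Aplus ∧ Cminus ⊓ Aplus = ⊥ := by
  rw [Aplus_eq_AntiZ_inf_kerTrace, inf_comm AntiZ]
  constructor
  · rw [← sup_inf_assoc_of_le _ Cminus_le_AntiZ, isCompl_Cminus_kerTrace.sup_eq_top, top_inf_eq]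
  · rw [← inf_assoc, isCompl_Cminus_kerTrace.inf_eq_bot, bot_inf_eq]
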